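/- Let p be a prime with p > h, and let λ = w·0 + pσ ∈ X⁺ ∩ C̄_ℤ with w ∈ W and σ ∈ X. If w' ∈ W and σ' ∈ X satisfy w'·λ = pσ', then w' = w⁻¹ and σ' = w⁻¹σ. In particular, there is exactly one w' ∈ W for which w'·λ lies in pX, and its length equals the length of w. -/

import Mathlib

/-!
Put `u = w'w`.  The two hypotheses `λ + ρ = wρ + pσ` and `w'(λ + ρ) = ρ + pσ'` combine to
`uρ - ρ = p(σ' - w'σ) ∈ pX`, and everything follows once `u = 1`.

For a simple root `α`, `⟨ρ, α∨⟩ = 1` (`pair_rho_simple`), so the integer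
`⟨uρ, α∨⟩ = ⟨ρ, (u⁻¹α)∨⟩` is congruent to `1` modulo `p`.  Since `a₀∨` is the highest coroot
(`pair_rho_le`), its absolute value is at most `⟨ρ, a₀∨⟩ = h - 1`, and `p > h` forces it to be `1`.
Hence `uρ = ρ`, and the stabilizer of `ρ` in the Weyl group is trivial (`weyl_fix_rho`), by the
exchange condition for words in the simple reflections (`exchange`).

The bound `⟨ρ, b∨⟩ ≤ ⟨ρ, a₀∨⟩` is where irreducibility enters: a root maximizing `⟨ρ, b∨⟩` is
dominant, hence not orthogonal to `a₀`, and then `b = a₀` or `a₀∨ - b∨` is a positive coroot.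

The equality of lengths is `ℓ(w⁻¹) = ℓ(w)`, obtained by reversing words.
-/

open scoped RealInnerProductSpace

namespace PaperDNN

variable {E : Type*} [NormedAddCommGroup E] [InnerProductSpace ℝ E]

/-- The coroot pairing `⟨x, α∨⟩ = 2⟪x,α⟫/⟪α,α⟫`. -/
noncomputable def pair (x a : E) : ℝ := 2 * ⟪x, a⟫ / ⟪a, a⟫

/-- `Φ` is a reduced irreducible root system in the Euclidean space `E`. -/
structure IsRootSystem (Φ : Finset E) : Prop where
  nonempty : Φ.Nonempty
  ne_zero : ∀ α ∈ Φ, α ≠ 0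
  span_top : Submodule.span ℝ (Φ : Set E) = ⊤
  reduced : ∀ α ∈ Φ, ∀ t : ℝ, t • α ∈ Φ → t = 1 ∨ t = -1
  reflect_mem : ∀ α ∈ Φ, ∀ β ∈ Φ, β - pair β α • α ∈ Φ
  pair_int : ∀ α ∈ Φ, ∀ β ∈ Φ, ∃ n : ℤ, pair β α = (n : ℝ)
  irred : ∀ S T : Set E, S ∪ T = (Φ : Set E) → S.Nonempty → T.Nonempty →
      (∀ a ∈ S, ∀ b ∈ T, ⟪a, b⟫ = 0) → False

/-- `Δ` is a base of simple roots for `Φ`: every root is a nonnegative or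
nonpositive integral combination of the simple roots. -/
structure IsBase (Φ Δ : Finset E) : Prop where
  subset : Δ ⊆ Φ
  indep : LinearIndependent ℝ (fun a : {x // x ∈ Δ} => (a : E))
  root_decomp : ∀ β ∈ Φ, (∃ c : E → ℕ, β = ∑ α ∈ Δ, (c α : ℝ) • α) ∨
      (∃ c : E → ℕ, β = -(∑ α ∈ Δ, (c α : ℝ) • α))

open Classical in
/-- The positive roots `Φ⁺` of `Φ` with respect to the base `Δ`. -/
noncomputable def posRoots (Φ Δ : Finset E) : Finset E :=
  Φ.filter fun β => ∃ c : E → ℕ, β = ∑ α ∈ Δ, (c α : ℝ) • α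

/-- `ρ`, one-half the sum of the positive roots. -/
noncomputable def rho (Φ Δ : Finset E) : E := (2⁻¹ : ℝ) • ∑ β ∈ posRoots Φ Δ, β

/-- The Weyl group of `Φ`, the subgroup of `GL(E)` generated by the reflections
`s_α : x ↦ x − ⟨x,α∨⟩α` in the roots `α ∈ Φ`.  Applied to a subset `J` of the
simple roots it yields the parabolic subgroup `W_J`. -/
def Weyl (Φ : Finset E) : Subgroup (E ≃ₗ[ℝ] E) :=
  Subgroup.closure { w : E ≃ₗ[ℝ] E | ∃ α ∈ Φ, ∀ x, w x = x - pair x α • α }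

/-- The dot action `w·λ = w(λ+ρ) − ρ`. -/
noncomputable def dotAct (Φ Δ : Finset E) (w : E ≃ₗ[ℝ] E) (lam : E) : E :=
  w (lam + rho Φ Δ) - rho Φ Δ

/-- The weight lattice `X = {λ ∈ E : ⟨λ,α∨⟩ ∈ ℤ for all α ∈ Φ}`. -/
def weightLattice (Φ : Finset E) : Set E :=
  { lam | ∀ α ∈ Φ, ∃ n : ℤ, pair lam α = (n : ℝ) }

/-- The root lattice `ℤΦ`. -/
def rootLattice (Φ : Finset E) : AddSubgroup E := AddSubgroup.closure (Φ : Set E)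

/-- The bottom `p`-alcove `C_ℤ = {λ ∈ X : 0 < ⟨λ+ρ,β∨⟩ < p for all β ∈ Φ⁺}`. -/
def bottomAlcove (Φ Δ : Finset E) (p : ℕ) : Set E :=
  { lam ∈ weightLattice Φ | ∀ β ∈ posRoots Φ Δ,
      0 < pair (lam + rho Φ Δ) β ∧ pair (lam + rho Φ Δ) β < (p : ℝ) }

/-- The closure `C̄_ℤ = {λ ∈ X : 0 ≤ ⟨λ+ρ,β∨⟩ ≤ p for all β ∈ Φ⁺}` of the
bottom `p`-alcove. -/
def closedAlcove (Φ Δ : Finset E) (p : ℕ) : Set E :=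
  { lam ∈ weightLattice Φ | ∀ β ∈ posRoots Φ Δ,
      0 ≤ pair (lam + rho Φ Δ) β ∧ pair (lam + rho Φ Δ) β ≤ (p : ℝ) }

/-- Membership in `X⁺`, the set of dominant weights. -/
def isDominant (Φ Δ : Finset E) (lam : E) : Prop :=
  lam ∈ weightLattice Φ ∧ ∀ α ∈ Δ, 0 ≤ pair lam α

/-- `a₀` is the highest short root of `Φ`: a root of minimal length such that
every root of the same length is `≤ a₀` (their difference is a nonnegative
integral combination of simple roots). -/
structure IsHighestShortRoot (Φ Δ : Finset E) (a₀ : E) : Prop where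
  mem : a₀ ∈ Φ
  short : ∀ β ∈ Φ, ⟪a₀, a₀⟫ ≤ ⟪β, β⟫
  highest : ∀ β ∈ Φ, ⟪β, β⟫ = ⟪a₀, a₀⟫ →
      ∃ c : E → ℕ, a₀ - β = ∑ α ∈ Δ, (c α : ℝ) • α


/-- The length of `w ∈ W`: the minimal number of simple reflections (reflections
in the simple roots `α ∈ Δ`) needed to express `w` as a product. -/
noncomputable def lengthW (Δ : Finset E) (w : E ≃ₗ[ℝ] E) : ℕ :=
  sInf { n | ∃ l : List (E ≃ₗ[ℝ] E), l.length = n ∧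
      (∀ s ∈ l, ∃ α ∈ Δ, ∀ x, s x = x - pair x α • α) ∧ l.prod = w }

/-! ### The pairing and reflections -/

lemma pair_add (x y a : E) : pair (x + y) a = pair x a + pair y a := by
  simp only [pair, inner_add_left]; ring

lemma pair_sub (x y a : E) : pair (x - y) a = pair x a - pair y a := by
  simp only [pair, inner_sub_left]; ring

lemma pair_smul (t : ℝ) (x a : E) : pair (t • x) a = t * pair x a := by
  simp only [pair, real_inner_smul_left]; ring

lemma pair_neg_right (x a : E) : pair x (-a) = -pair x a := by
  simp only [pair, inner_neg_right, inner_neg_left, neg_neg]; ring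

lemma pair_self {a : E} (ha : a ≠ 0) : pair a a = 2 := by
  have : ⟪a, a⟫ ≠ 0 := inner_self_ne_zero.mpr ha
  simp only [pair]; field_simp

lemma pair_mul_inner_self (x a : E) : pair x a * ⟪a, a⟫ = 2 * ⟪x, a⟫ := by
  by_cases ha : a = 0
  · simp [ha]
  · have : ⟪a, a⟫ ≠ 0 := inner_self_ne_zero.mpr ha
    simp only [pair]; field_simp

lemma pair_pos_iff {x a : E} (ha : a ≠ 0) : 0 < pair x a ↔ 0 < ⟪x, a⟫ := by
  have h1 : 0 < ⟪a, a⟫ := real_inner_self_pos.mpr ha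
  have h2 := pair_mul_inner_self x a
  constructor <;> intro h <;> by_contra! hc <;> nlinarith

lemma pair_nonneg_iff {x a : E} (ha : a ≠ 0) : 0 ≤ pair x a ↔ 0 ≤ ⟪x, a⟫ := by
  have h1 : 0 < ⟪a, a⟫ := real_inner_self_pos.mpr ha
  have h2 := pair_mul_inner_self x a
  constructor <;> intro h <;> by_contra! hc <;> nlinarith

lemma refl_involutive (a x : E) :
    (x - pair x a • a) - pair (x - pair x a • a) a • a = x := by
  by_cases ha : a = 0
  · simp [ha]
  · rw [pair_sub, pair_smul, pair_self ha]; module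

/-- The reflection `s_a` as an element of `GL(E)` (the identity when `a = 0`). -/
noncomputable def refl (a : E) : E ≃ₗ[ℝ] E :=
  LinearEquiv.ofInvolutive
    { toFun := fun x => x - pair x a • a
      map_add' := fun x y => by rw [pair_add]; module
      map_smul' := fun t x => by rw [pair_smul, RingHom.id_apply]; module }
    (refl_involutive a)

lemma refl_apply (a x : E) : refl a x = x - pair x a • a := rfl

lemma refl_refl (a x : E) : refl a (refl a x) = x := refl_involutive a x

lemma refl_self (a : E) : refl a a = -a := by
  by_cases ha : a = 0
  · simp [ha]
  · rw [refl_apply, pair_self ha]; module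

lemma eq_refl {s : E ≃ₗ[ℝ] E} {a : E} (hs : ∀ x, s x = x - pair x a • a) : s = refl a :=
  LinearEquiv.ext hs

lemma refl_inner (a x y : E) : ⟪refl a x, refl a y⟫ = ⟪x, y⟫ := by
  have h1 := pair_mul_inner_self x a
  have h2 := pair_mul_inner_self y a
  simp only [refl_apply, inner_sub_left, inner_sub_right, real_inner_smul_left,
    real_inner_smul_right]
  rw [real_inner_comm y a]
  linear_combination (1/2) * pair y a * h1 + (1/2) * pair x a * h2

lemma pair_isometry {u : E ≃ₗ[ℝ] E} (hu : ∀ x y, ⟪u x, u y⟫ = ⟪x, y⟫) (x a : E) :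
    pair (u x) (u a) = pair x a := by
  simp only [pair, hu]

/-- The reflection formula for coroots: `(s_a b)∨ = b∨ - ⟨a, b∨⟩ a∨`. -/
lemma pair_refl_right (x a b : E) :
    pair x (refl a b) = pair x b - pair a b * pair x a := by
  rw [← pair_isometry (refl_inner a), refl_refl, refl_apply, pair_sub, pair_smul]; ring

lemma isometry_mul_refl {u : E ≃ₗ[ℝ] E} (hu : ∀ x y, ⟪u x, u y⟫ = ⟪x, y⟫) (a : E) :
    u * refl a = refl (u a) * u := by
  ext x
  simp only [LinearEquiv.mul_apply, refl_apply, map_sub, map_smul, pair_isometry hu]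

/-! ### Weyl group elements -/

lemma refl_mem_root {Φ : Finset E} (hΦ : IsRootSystem Φ) {a b : E} (ha : a ∈ Φ) (hb : b ∈ Φ) :
    refl a b ∈ Φ := hΦ.reflect_mem a ha b hb

lemma neg_mem_root {Φ : Finset E} (hΦ : IsRootSystem Φ) {a : E} (ha : a ∈ Φ) : -a ∈ Φ := by
  rw [← refl_self]; exact refl_mem_root hΦ ha ha

lemma symm_mem_root {Φ : Finset E} {u : E ≃ₗ[ℝ] E} (hu : ∀ b ∈ Φ, u b ∈ Φ) :
    ∀ b ∈ Φ, u.symm b ∈ Φ := by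
  intro b hb
  obtain ⟨c, hc, rfl⟩ := Finset.surjOn_of_injOn_of_card_le (s := Φ) (t := Φ) u
    (fun b hb => hu b hb) u.injective.injOn le_rfl hb
  simpa using hc

lemma weyl_isometry {Φ : Finset E} (hΦ : IsRootSystem Φ) {u : E ≃ₗ[ℝ] E} (hu : u ∈ Weyl Φ) :
    (∀ x y, ⟪u x, u y⟫ = ⟪x, y⟫) ∧ ∀ b ∈ Φ, u b ∈ Φ := by
  induction hu using Subgroup.closure_induction with
  | mem s hs =>
    obtain ⟨a, ha, hs⟩ := hs
    rw [eq_refl hs]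
    exact ⟨refl_inner a, fun b hb => refl_mem_root hΦ ha hb⟩
  | one => exact ⟨fun _ _ => rfl, fun _ h => h⟩
  | mul u v _ _ hu hv =>
    exact ⟨fun x y => by simp only [LinearEquiv.mul_apply, hu.1, hv.1],
      fun b hb => hu.2 _ (hv.2 b hb)⟩
  | inv u _ hu =>
    refine ⟨fun x y => ?_, symm_mem_root hu.2⟩
    rw [← hu.1]
    exact congrArg₂ _ (u.apply_symm_apply x) (u.apply_symm_apply y)

lemma weyl_pair {Φ : Finset E} (hΦ : IsRootSystem Φ) {u : E ≃ₗ[ℝ] E} (hu : u ∈ Weyl Φ)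
    (x a : E) : pair (u x) a = pair x (u.symm a) := by
  rw [← pair_isometry (weyl_isometry hΦ hu).1 x, u.apply_symm_apply]

/-- `s` is a reflection in a root of `Δ`. -/
def IsSimpleRefl (Δ : Finset E) (s : E ≃ₗ[ℝ] E) : Prop :=
  ∃ α ∈ Δ, ∀ x, s x = x - pair x α • α

lemma isSimpleRefl_refl {Δ : Finset E} {α : E} (hα : α ∈ Δ) : IsSimpleRefl Δ (refl α) :=
  ⟨α, hα, fun _ => rfl⟩

lemma word_reverse {Δ : Finset E} (l : List (E ≃ₗ[ℝ] E)) (hl : ∀ s ∈ l, IsSimpleRefl Δ s) :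
    l.reverse.prod = l.prod⁻¹ := by
  induction l with
  | nil => simp
  | cons s t ih =>
    obtain ⟨α, -, hs⟩ := hl s List.mem_cons_self
    have hs' : s⁻¹ = s := by
      rw [eq_refl hs, inv_eq_iff_mul_eq_one]
      ext x; exact refl_refl α x
    simp [ih (fun s hs => hl s (List.mem_cons_of_mem _ hs)), hs']

lemma exists_word_inv (Δ : Finset E) (w : E ≃ₗ[ℝ] E) (n : ℕ)
    (hn : ∃ l : List (E ≃ₗ[ℝ] E), l.length = n ∧ (∀ s ∈ l, IsSimpleRefl Δ s) ∧ l.prod = w) :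
    ∃ l : List (E ≃ₗ[ℝ] E), l.length = n ∧ (∀ s ∈ l, IsSimpleRefl Δ s) ∧ l.prod = w⁻¹ := by
  obtain ⟨l, h1, h2, h3⟩ := hn
  exact ⟨l.reverse, by simpa using h1, by simpa using h2, by rw [word_reverse l h2, h3]⟩

lemma lengthW_symm (Δ : Finset E) (w : E ≃ₗ[ℝ] E) : lengthW Δ w.symm = lengthW Δ w := by
  unfold lengthW
  congr 1
  ext n
  exact ⟨fun h => inv_inv w ▸ exists_word_inv Δ w⁻¹ n h,
    fun h => exists_word_inv Δ w n h⟩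

/-! ### Positive roots and `ρ` -/

section Base

variable {Φ Δ : Finset E}

lemma mem_posRoots {b : E} :
    b ∈ posRoots Φ Δ ↔ b ∈ Φ ∧ ∃ c : E → ℕ, b = ∑ α ∈ Δ, (c α : ℝ) • α := by
  simp [posRoots]

lemma coeff_unique (hΔ : IsBase Φ Δ) {f g : E → ℝ}
    (hfg : ∑ α ∈ Δ, f α • α = ∑ α ∈ Δ, g α • α) : ∀ α ∈ Δ, f α = g α := by
  intro α hα
  have h0 : ∑ a : {x // x ∈ Δ}, (f a - g a) • (a : E) = 0 := by
    rw [Finset.sum_coe_sort Δ (fun a => (f a - g a) • a)]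
    simp only [sub_smul, Finset.sum_sub_distrib, hfg, sub_self]
  have := Fintype.linearIndependent_iff.mp hΔ.indep (fun a => f a - g a) h0 ⟨α, hα⟩
  exact sub_eq_zero.mp this

lemma single_sum {α : E} (hα : α ∈ Δ) (t : ℝ) :
    ∃ f : E → ℝ, f α = t ∧ (∀ γ, γ ≠ α → f γ = 0) ∧ t • α = ∑ γ ∈ Δ, f γ • γ := by
  classical
  refine ⟨fun γ => if γ = α then t else 0, by simp, fun γ hγ => by simp [hγ], ?_⟩
  simp [ite_smul, hα]

lemma simple_pos (hΔ : IsBase Φ Δ) {α : E} (hα : α ∈ Δ) : α ∈ posRoots Φ Δ := by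
  classical
  refine mem_posRoots.mpr ⟨hΔ.subset hα, fun γ => if γ = α then 1 else 0, ?_⟩
  simp [ite_smul, hα]

lemma pos_or_neg (hΦ : IsRootSystem Φ) (hΔ : IsBase Φ Δ) {b : E} (hb : b ∈ Φ) :
    b ∈ posRoots Φ Δ ∨ -b ∈ posRoots Φ Δ := by
  rcases hΔ.root_decomp b hb with ⟨c, hc⟩ | ⟨c, hc⟩
  · exact Or.inl (mem_posRoots.mpr ⟨hb, c, hc⟩)
  · exact Or.inr (mem_posRoots.mpr ⟨neg_mem_root hΦ hb, c, by rw [hc, neg_neg]⟩)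

/-- A simple reflection `s_α` keeps every positive root other than `α` positive: such a root has a
positive coefficient at a simple root different from `α`, and `s_α` does not change it. -/
lemma refl_pos (hΦ : IsRootSystem Φ) (hΔ : IsBase Φ Δ) {α b : E} (hα : α ∈ Δ)
    (hb : b ∈ posRoots Φ Δ) (hne : b ≠ α) : refl α b ∈ posRoots Φ Δ := by
  have hbΦ := (mem_posRoots.mp hb).1
  obtain ⟨c, hc⟩ := (mem_posRoots.mp hb).2
  have hr : refl α b ∈ Φ := refl_mem_root hΦ (hΔ.subset hα) hbΦ
  rcases hΔ.root_decomp _ hr with hd | ⟨d, hd⟩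
  · exact mem_posRoots.mpr ⟨hr, hd⟩
  exfalso
  obtain ⟨f, -, hf0, hf⟩ := single_sum hα (pair b α)
  have hsum : ∑ γ ∈ Δ, ((c γ : ℝ) + d γ) • γ = ∑ γ ∈ Δ, f γ • γ := by
    simp only [add_smul, Finset.sum_add_distrib]
    rw [← hc, ← hf, ← neg_eq_iff_eq_neg.mpr hd, refl_apply]
    module
  have hc0 : ∀ γ ∈ Δ, γ ≠ α → (c γ : ℝ) = 0 := by
    intro γ hγ hγα
    have h1 := coeff_unique hΔ hsum γ hγ
    rw [hf0 γ hγα] at h1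
    have h2 : (0 : ℝ) ≤ c γ := Nat.cast_nonneg _
    have h3 : (0 : ℝ) ≤ d γ := Nat.cast_nonneg _
    linarith
  have hbα : b = (c α : ℝ) • α := by
    rw [hc]
    exact Finset.sum_eq_single_of_mem α hα (fun γ hγ h => by rw [hc0 γ hγ h, zero_smul])
  rcases hΦ.reduced α (hΔ.subset hα) (c α) (hbα ▸ hbΦ) with h | h
  · exact hne (by rw [hbα, h, one_smul])
  · have h2 : (0 : ℝ) ≤ c α := Nat.cast_nonneg _
    linarith

lemma pair_rho_simple (hΦ : IsRootSystem Φ) (hΔ : IsBase Φ Δ) {α : E} (hα : α ∈ Δ) :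
    pair (rho Φ Δ) α = 1 := by
  classical
  have hα0 := hΦ.ne_zero α (hΔ.subset hα)
  have hαp := simple_pos hΔ hα
  have hmem : ∀ b ∈ (posRoots Φ Δ).erase α, refl α b ∈ (posRoots Φ Δ).erase α := by
    intro b hb
    rw [Finset.mem_erase] at hb ⊢
    refine ⟨fun h => ?_, refl_pos hΦ hΔ hα hb.2 hb.1⟩
    -- `s_α b = α` would make `b = -α`, whose coefficient at `α` is negative
    have hb' : b = -α := by rw [← refl_refl α b, h, refl_self]
    obtain ⟨c, hc⟩ := (mem_posRoots.mp hb.2).2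
    obtain ⟨f, hf1, -, hf⟩ := single_sum hα (-1)
    have h3 := coeff_unique hΔ (f := fun γ => (c γ : ℝ)) (g := f)
      (by rw [← hc, ← hf, hb']; module) α hα
    have h2 : (0 : ℝ) ≤ c α := Nat.cast_nonneg _
    linarith
  have hperm : ∑ b ∈ (posRoots Φ Δ).erase α, refl α b = ∑ b ∈ (posRoots Φ Δ).erase α, b :=
    Finset.sum_bij' (fun b _ => refl α b) (fun b _ => refl α b) hmem hmem
      (fun b _ => refl_refl α b) (fun b _ => refl_refl α b) (fun _ _ => rfl)
  have hrho : refl α (rho Φ Δ) = rho Φ Δ - α := by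
    rw [rho, map_smul, map_sum, ← Finset.add_sum_erase _ _ hαp, ← Finset.add_sum_erase _ _ hαp,
      hperm, refl_self]
    module
  rw [refl_apply] at hrho
  have h1 : (pair (rho Φ Δ) α - 1) • α = 0 := by
    rw [sub_smul, one_smul, sub_eq_zero]; exact sub_right_injective hrho
  rcases smul_eq_zero.mp h1 with h | h
  · linarith
  · exact absurd h hα0

lemma inner_rho_pos (hΦ : IsRootSystem Φ) (hΔ : IsBase Φ Δ) {b : E} (hb : b ∈ posRoots Φ Δ) :
    0 < ⟪rho Φ Δ, b⟫ := by
  obtain ⟨hbΦ, c, hc⟩ := mem_posRoots.mp hb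
  have hs : ∀ α ∈ Δ, 0 < ⟪rho Φ Δ, α⟫ := fun α hα => by
    rw [← pair_pos_iff (hΦ.ne_zero α (hΔ.subset hα)), pair_rho_simple hΦ hΔ hα]
    exact one_pos
  have hex : ∃ α ∈ Δ, c α ≠ 0 := by
    by_contra! hcon
    apply hΦ.ne_zero b hbΦ
    rw [hc]
    exact Finset.sum_eq_zero fun α hα => by rw [hcon α hα]; simp
  obtain ⟨α, hα, hcα⟩ := hex
  rw [hc, inner_sum]
  simp only [real_inner_smul_right]
  refine Finset.sum_pos' (fun γ hγ => mul_nonneg (Nat.cast_nonneg _) (hs γ hγ).le) ⟨α, hα, ?_⟩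
  exact mul_pos (Nat.cast_pos.mpr (Nat.pos_of_ne_zero hcα)) (hs α hα)

lemma pos_of_inner_rho_pos (hΦ : IsRootSystem Φ) (hΔ : IsBase Φ Δ) {b : E} (hb : b ∈ Φ)
    (h : 0 < ⟪rho Φ Δ, b⟫) : b ∈ posRoots Φ Δ := by
  rcases pos_or_neg hΦ hΔ hb with h1 | h1
  · exact h1
  · have := inner_rho_pos hΦ hΔ h1
    rw [inner_neg_right] at this
    linarith

lemma inner_comb_nonneg {x : E} (hx : ∀ α ∈ Δ, 0 ≤ ⟪x, α⟫) (c : E → ℕ) :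
    0 ≤ ⟪x, ∑ α ∈ Δ, (c α : ℝ) • α⟫ := by
  rw [inner_sum]
  refine Finset.sum_nonneg fun α hα => ?_
  rw [real_inner_smul_right]
  exact mul_nonneg (Nat.cast_nonneg _) (hx α hα)

/-! ### The stabilizer of `ρ` -/

/-- Every root is carried, up to sign, to a simple root by a product of simple reflections: among
the positive roots in the orbit of `b` or `-b`, one minimizing `⟪ρ, ·⟫` is simple. -/
lemma exists_simple_conj (hΦ : IsRootSystem Φ) (hΔ : IsBase Φ Δ) {b : E} (hb : b ∈ Φ) :
    ∃ v ∈ Subgroup.closure {s : E ≃ₗ[ℝ] E | IsSimpleRefl Δ s}, v b ∈ Δ ∨ -(v b) ∈ Δ := by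
  classical
  set W₀ := Subgroup.closure {s : E ≃ₗ[ℝ] E | IsSimpleRefl Δ s} with hW₀
  let S := (posRoots Φ Δ).filter fun g => ∃ v ∈ W₀, v b = g ∨ -(v b) = g
  have hS : S.Nonempty := by
    rcases pos_or_neg hΦ hΔ hb with h | h
    · exact ⟨b, Finset.mem_filter.mpr ⟨h, 1, one_mem _, Or.inl rfl⟩⟩
    · exact ⟨-b, Finset.mem_filter.mpr ⟨h, 1, one_mem _, Or.inr rfl⟩⟩
  obtain ⟨g, hg, hmin⟩ := S.exists_min_image (fun g => ⟪rho Φ Δ, g⟫) hS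
  obtain ⟨hgp, v, hv, hvg⟩ := Finset.mem_filter.mp hg
  suffices hgΔ : g ∈ Δ by
    refine ⟨v, hv, ?_⟩
    rcases hvg with h | h
    · exact Or.inl (h ▸ hgΔ)
    · exact Or.inr (h ▸ hgΔ)
  by_contra hgΔ
  obtain ⟨hgΦ, c, hc⟩ := mem_posRoots.mp hgp
  have hex : ∃ α ∈ Δ, 0 < ⟪g, α⟫ := by
    by_contra! hcon
    have h1 : 0 ≤ ⟪-g, ∑ α ∈ Δ, (c α : ℝ) • α⟫ :=
      inner_comb_nonneg (fun α hα => by rw [inner_neg_left]; linarith [hcon α hα]) c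
    rw [← hc, inner_neg_left] at h1
    have := real_inner_self_pos.mpr (hΦ.ne_zero g hgΦ)
    linarith
  obtain ⟨α, hα, hgα⟩ := hex
  have hne : g ≠ α := fun h => hgΔ (h ▸ hα)
  have hmem : refl α g ∈ S := by
    refine Finset.mem_filter.mpr ⟨refl_pos hΦ hΔ hα hgp hne, refl α * v,
      mul_mem (Subgroup.subset_closure (isSimpleRefl_refl hα)) hv, ?_⟩
    rcases hvg with h | h
    · exact Or.inl (by rw [LinearEquiv.mul_apply, h])
    · exact Or.inr (by rw [LinearEquiv.mul_apply, ← map_neg, h])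
  have h1 := hmin _ hmem
  rw [refl_apply, inner_sub_right, real_inner_smul_right] at h1
  have h2 := inner_rho_pos hΦ hΔ (simple_pos hΔ hα)
  have h3 := (pair_pos_iff (hΦ.ne_zero α (hΔ.subset hα))).mpr hgα
  nlinarith [mul_pos h3 h2]

lemma refl_neg (a : E) : refl (-a) = refl a := by
  ext x
  simp only [refl_apply, pair_neg_right]
  module

lemma weyl_le_simple (hΦ : IsRootSystem Φ) (hΔ : IsBase Φ Δ) :
    Weyl Φ ≤ Subgroup.closure {s : E ≃ₗ[ℝ] E | IsSimpleRefl Δ s} := by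
  have hle : Subgroup.closure {s : E ≃ₗ[ℝ] E | IsSimpleRefl Δ s} ≤ Weyl Φ :=
    Subgroup.closure_mono fun s ⟨α, hα, hs⟩ => ⟨α, hΔ.subset hα, hs⟩
  refine (Subgroup.closure_le _).mpr ?_
  rintro s ⟨b, hb, hs⟩
  rw [eq_refl hs]
  obtain ⟨v, hv, hvb⟩ := exists_simple_conj hΦ hΔ hb
  have hconj : refl b = v⁻¹ * refl (v b) * v := by
    rw [mul_assoc, ← isometry_mul_refl (weyl_isometry hΦ (hle hv)).1, inv_mul_cancel_left]
  have hr : refl (v b) ∈ Subgroup.closure {s : E ≃ₗ[ℝ] E | IsSimpleRefl Δ s} := by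
    rcases hvb with h | h
    · exact Subgroup.subset_closure (isSimpleRefl_refl h)
    · rw [← refl_neg]; exact Subgroup.subset_closure (isSimpleRefl_refl h)
  rw [hconj]
  exact mul_mem (mul_mem (inv_mem hv) hr) hv

lemma word_mem_weyl (hΔ : IsBase Φ Δ) {l : List (E ≃ₗ[ℝ] E)}
    (hl : ∀ s ∈ l, IsSimpleRefl Δ s) : l.prod ∈ Weyl Φ :=
  list_prod_mem fun s hs => Subgroup.subset_closure <| by
    obtain ⟨α, hα, h⟩ := hl s hs
    exact ⟨α, hΔ.subset hα, h⟩

lemma exists_word (hΦ : IsRootSystem Φ) (hΔ : IsBase Φ Δ) {u : E ≃ₗ[ℝ] E} (hu : u ∈ Weyl Φ) :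
    ∃ l : List (E ≃ₗ[ℝ] E), (∀ s ∈ l, IsSimpleRefl Δ s) ∧ l.prod = u := by
  have hu' := weyl_le_simple hΦ hΔ hu
  clear hu
  induction hu' using Subgroup.closure_induction with
  | mem s hs => exact ⟨[s], by simpa using hs, by simp⟩
  | one => exact ⟨[], by simp, by simp⟩
  | mul u v _ _ hu hv =>
    obtain ⟨l, hl, rfl⟩ := hu
    obtain ⟨m, hm, rfl⟩ := hv
    refine ⟨l ++ m, fun s hs => ?_, List.prod_append⟩
    exact (List.mem_append.mp hs).elim (hl s) (hm s)
  | inv u _ hu =>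
    obtain ⟨l, hl, rfl⟩ := hu
    exact ⟨l.reverse, by simpa using hl, word_reverse l hl⟩

/-- The exchange condition: a word whose product makes the simple root `α` negative absorbs `s_α`
on the right by losing one letter. -/
lemma exchange (hΦ : IsRootSystem Φ) (hΔ : IsBase Φ Δ) {α : E} (hα : α ∈ Δ)
    (l : List (E ≃ₗ[ℝ] E)) (hl : ∀ s ∈ l, IsSimpleRefl Δ s)
    (hneg : -(l.prod α) ∈ posRoots Φ Δ) :
    ∃ m : List (E ≃ₗ[ℝ] E), m.length + 1 = l.length ∧ (∀ s ∈ m, IsSimpleRefl Δ s) ∧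
      l.prod * refl α = m.prod := by
  induction l with
  | nil =>
    have h1 := inner_rho_pos hΦ hΔ hneg
    have h2 := inner_rho_pos hΦ hΔ (simple_pos hΔ hα)
    simp only [List.prod_nil, LinearEquiv.coe_one, id_eq, inner_neg_right] at h1
    linarith
  | cons s t ih =>
    have ht : ∀ s ∈ t, IsSimpleRefl Δ s := fun s hs => hl s (List.mem_cons_of_mem _ hs)
    have hs := hl s List.mem_cons_self
    have htW := weyl_isometry hΦ (word_mem_weyl hΔ ht)
    rcases pos_or_neg hΦ hΔ (htW.2 α (hΔ.subset hα)) with hp | hn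
    · obtain ⟨δ, hδ, hsδ⟩ := hs
      have hs := eq_refl hsδ
      have htα : t.prod α = δ := by
        by_contra hne
        have h1 := inner_rho_pos hΦ hΔ (refl_pos hΦ hΔ hδ hp hne)
        have h2 := inner_rho_pos hΦ hΔ hneg
        rw [List.prod_cons, LinearEquiv.mul_apply, hs, inner_neg_right] at h2
        linarith
      refine ⟨t, by simp, ht, ?_⟩
      rw [List.prod_cons, mul_assoc, isometry_mul_refl htW.1, htα, hs, ← mul_assoc]
      ext x
      simp only [LinearEquiv.mul_apply, refl_refl]
    · obtain ⟨m, hm1, hm2, hm3⟩ := ih ht hn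
      refine ⟨s :: m, by simp [hm1], ?_, by rw [List.prod_cons, mul_assoc, hm3, List.prod_cons]⟩
      intro r hr
      rcases List.mem_cons.mp hr with rfl | hr
      · exact hs
      · exact hm2 r hr

lemma word_eq_one (hΦ : IsRootSystem Φ) (hΔ : IsBase Φ Δ) (n : ℕ) :
    ∀ l : List (E ≃ₗ[ℝ] E), l.length = n → (∀ s ∈ l, IsSimpleRefl Δ s) →
      (∀ α ∈ Δ, l.prod α ∈ posRoots Φ Δ) → l.prod = 1 := by
  induction n using Nat.strong_induction_on with
  | _ n ih =>
    intro l hlen hl hpos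
    rcases List.eq_nil_or_concat l with rfl | ⟨t, s, rfl⟩
    · simp
    rw [List.concat_eq_append] at *
    obtain ⟨α, hα, hs⟩ := hl s (by simp)
    have hs := eq_refl hs
    have hprod : (t ++ [s]).prod = t.prod * refl α := by simp [hs]
    have hneg : -(t.prod α) ∈ posRoots Φ Δ := by
      have := hpos α hα
      rwa [hprod, LinearEquiv.mul_apply, refl_self, map_neg] at this
    obtain ⟨m, hm1, hm2, hm3⟩ := exchange hΦ hΔ hα t (fun s hs => hl s (by simp [hs])) hneg
    rw [hprod, hm3] at hpos ⊢
    refine ih m.length ?_ m rfl hm2 hpos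
    rw [← hlen, List.length_append, ← hm1, List.length_singleton]
    omega

/-- The stabilizer of `ρ` in the Weyl group is trivial: an element fixing `ρ` preserves the sign of
`⟪ρ, ·⟫`, hence positivity of roots. -/
lemma weyl_fix_rho (hΦ : IsRootSystem Φ) (hΔ : IsBase Φ Δ) {u : E ≃ₗ[ℝ] E} (hu : u ∈ Weyl Φ)
    (hfix : u (rho Φ Δ) = rho Φ Δ) : u = 1 := by
  obtain ⟨hiso, hroot⟩ := weyl_isometry hΦ hu
  obtain ⟨l, hl, rfl⟩ := exists_word hΦ hΔ hu
  refine word_eq_one hΦ hΔ _ l rfl hl fun α hα => ?_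
  refine pos_of_inner_rho_pos hΦ hΔ (hroot α (hΔ.subset hα)) ?_
  rw [← hfix, hiso]
  exact inner_rho_pos hΦ hΔ (simple_pos hΔ hα)

/-! ### The highest short root -/

lemma highest_dominant (hΦ : IsRootSystem Φ) (hΔ : IsBase Φ Δ) {a₀ : E}
    (ha₀ : IsHighestShortRoot Φ Δ a₀) : ∀ α ∈ Δ, 0 ≤ ⟪a₀, α⟫ := by
  intro α hα
  rw [← pair_nonneg_iff (hΦ.ne_zero α (hΔ.subset hα))]
  obtain ⟨c, hc⟩ := ha₀.highest (refl α a₀) (refl_mem_root hΦ (hΔ.subset hα) ha₀.mem)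
    (refl_inner α a₀ a₀)
  obtain ⟨f, hf1, -, hf⟩ := single_sum hα (pair a₀ α)
  have h1 := coeff_unique hΔ (f := f) (g := fun γ => (c γ : ℝ))
    (by rw [← hf, ← hc, refl_apply]; module) α hα
  rw [← hf1, h1]
  exact Nat.cast_nonneg _

/-- By irreducibility, no root is orthogonal to all roots of the length of `a₀`: the roots that are
and those that are not form an orthogonal decomposition of `Φ`. -/
lemma exists_short_inner_ne (hΦ : IsRootSystem Φ) {a₀ : E} (ha₀ : a₀ ∈ Φ) {b : E} (hb : b ∈ Φ) :
    ∃ g ∈ Φ, ⟪g, g⟫ = ⟪a₀, a₀⟫ ∧ ⟪g, b⟫ ≠ 0 := by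
  by_contra! hcon
  let P : E → Prop := fun b => ∃ g ∈ Φ, ⟪g, g⟫ = ⟪a₀, a₀⟫ ∧ ⟪g, b⟫ ≠ 0
  refine hΦ.irred {b | b ∈ Φ ∧ P b} {b | b ∈ Φ ∧ ¬ P b} ?_ ⟨a₀, ha₀, a₀, ha₀, rfl, ?_⟩
    ⟨b, hb, ?_⟩ ?_
  · ext x
    change (x ∈ Φ ∧ P x) ∨ (x ∈ Φ ∧ ¬ P x) ↔ x ∈ Φ
    rw [← and_or_left, and_iff_left (Classical.em (P x))]
  · exact inner_self_ne_zero.mpr (hΦ.ne_zero a₀ ha₀)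
  · rintro ⟨g, hg, h1, h2⟩
    exact h2 (hcon g hg h1)
  · rintro a ⟨ha, g, hg, hgl, hga⟩ d ⟨hd, hnd⟩
    have hall : ∀ g ∈ Φ, ⟪g, g⟫ = ⟪a₀, a₀⟫ → ⟪g, d⟫ = 0 := by
      intro g hg hgl
      by_contra h
      exact hnd ⟨g, hg, hgl, h⟩
    have h1 := hall g hg hgl
    have h2 := hall (refl a g) (refl_mem_root hΦ ha hg) (by rw [refl_inner, hgl])
    rw [refl_apply, inner_sub_left, real_inner_smul_left, h1, zero_sub, neg_eq_zero,
      mul_eq_zero] at h2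
    refine h2.resolve_left fun h3 => hga ?_
    have := pair_mul_inner_self g a
    rw [h3] at this
    linarith

/-- The bound `⟨ρ, b∨⟩ ≤ ⟨ρ, a₀∨⟩` for roots `b` with `⟪a₀, b⟫ > 0`: then `⟨a₀, b∨⟩ = 1` unless
`b = a₀`, so `a₀∨ - b∨` is the coroot of `-s_{a₀} b`, which is positive as `a₀` is dominant. -/
lemma pair_rho_le_of_inner_pos (hΦ : IsRootSystem Φ) (hΔ : IsBase Φ Δ) {a₀ : E}
    (ha₀ : IsHighestShortRoot Φ Δ a₀) {b : E} (hb : b ∈ Φ) (hpos : 0 < ⟪a₀, b⟫) :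
    pair (rho Φ Δ) b ≤ pair (rho Φ Δ) a₀ := by
  by_cases hne : b = a₀
  · rw [hne]
  have hb0 := hΦ.ne_zero b hb
  have ha0 := hΦ.ne_zero a₀ ha₀.mem
  obtain ⟨n, hn⟩ := hΦ.pair_int b hb a₀ ha₀.mem
  have hn0 : 0 < n := by
    have := (pair_pos_iff hb0).mpr hpos
    rw [hn] at this
    exact_mod_cast this
  have hn1 : n = 1 := by
    by_contra hn1
    have h2 : (2 : ℝ) ≤ pair a₀ b := by
      rw [hn]; exact_mod_cast (by omega : (2 : ℤ) ≤ n)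
    have h3 := pair_mul_inner_self a₀ b
    have h4 : 0 < ⟪b, b⟫ := real_inner_self_pos.mpr hb0
    have h5 : 0 < ⟪b - a₀, b - a₀⟫ := real_inner_self_pos.mpr (sub_ne_zero.mpr hne)
    rw [inner_sub_left, inner_sub_right, inner_sub_right, real_inner_comm a₀ b] at h5
    have h6 := ha₀.short b hb
    nlinarith
  have hd : refl a₀ b ∈ Φ := refl_mem_root hΦ ha₀.mem hb
  have hdneg : -(refl a₀ b) ∈ posRoots Φ Δ := by
    rcases pos_or_neg hΦ hΔ hd with h | h
    · exfalso
      obtain ⟨c, hc⟩ := (mem_posRoots.mp h).2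
      have h1 := inner_comb_nonneg (highest_dominant hΦ hΔ ha₀) c
      rw [← hc, ← refl_inner a₀, refl_refl, refl_self, inner_neg_left] at h1
      linarith
    · exact h
  have h1 := (pair_pos_iff (neg_ne_zero.mpr (hΦ.ne_zero _ hd))).mpr (inner_rho_pos hΦ hΔ hdneg)
  rw [pair_neg_right, pair_refl_right, hn, hn1] at h1
  push_cast at h1
  linarith

/-- `a₀∨` is the highest coroot, as measured by `ρ`: a root `b` maximizing `⟨ρ, b∨⟩` is dominant,
and a dominant root has positive inner product with `a₀`. -/
lemma pair_rho_le (hΦ : IsRootSystem Φ) (hΔ : IsBase Φ Δ) {a₀ : E}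
    (ha₀ : IsHighestShortRoot Φ Δ a₀) {b : E} (hb : b ∈ Φ) :
    pair (rho Φ Δ) b ≤ pair (rho Φ Δ) a₀ := by
  obtain ⟨m, hm, hmax⟩ := Φ.exists_max_image (fun b => pair (rho Φ Δ) b) hΦ.nonempty
  refine (hmax b hb).trans (pair_rho_le_of_inner_pos hΦ hΔ ha₀ hm ?_)
  have hdom : ∀ α ∈ Δ, 0 ≤ ⟪m, α⟫ := by
    intro α hα
    have h1 := hmax _ (refl_mem_root hΦ (hΔ.subset hα) hm)
    rw [pair_refl_right, pair_rho_simple hΦ hΔ hα] at h1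
    rw [real_inner_comm, ← pair_nonneg_iff (hΦ.ne_zero m hm)]
    linarith
  have key : ∀ g ∈ Φ, ⟪g, g⟫ = ⟪a₀, a₀⟫ → 0 < ⟪g, m⟫ → 0 < ⟪a₀, m⟫ := by
    intro g hg hgl hgm
    obtain ⟨c, hc⟩ := ha₀.highest g hg hgl
    have h1 := inner_comb_nonneg hdom c
    rw [← hc, inner_sub_right, real_inner_comm, real_inner_comm g m] at h1
    linarith
  obtain ⟨g, hg, hgl, hgm⟩ := exists_short_inner_ne hΦ ha₀.mem hm
  rcases lt_or_gt_of_ne hgm with h | h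
  · exact key (-g) (neg_mem_root hΦ hg) (by simpa using hgl) (by rw [inner_neg_left]; linarith)
  · exact key g hg hgl h

/-! ### Congruence of `uρ` and `ρ` modulo `pX` -/

lemma eq_zero_of_pair_simple (hΦ : IsRootSystem Φ) (hΔ : IsBase Φ Δ) {x : E}
    (hx : ∀ α ∈ Δ, pair x α = 0) : x = 0 := by
  have h1 : ∀ α ∈ Δ, ⟪x, α⟫ = 0 := fun α hα => by
    have := pair_mul_inner_self x α
    rw [hx α hα] at this
    linarith
  have h2 : ∀ b ∈ Φ, ⟪x, b⟫ = 0 := by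
    intro b hb
    have h3 : ∀ c : E → ℕ, ⟪x, ∑ α ∈ Δ, (c α : ℝ) • α⟫ = 0 := fun c => by
      rw [inner_sum]
      exact Finset.sum_eq_zero fun α hα => by rw [real_inner_smul_right, h1 α hα, mul_zero]
    rcases hΔ.root_decomp b hb with ⟨c, hc⟩ | ⟨c, hc⟩
    · rw [hc, h3]
    · rw [hc, inner_neg_right, h3, neg_zero]
  have h4 : x ∈ Submodule.span ℝ (Φ : Set E) := hΦ.span_top ▸ Submodule.mem_top
  have h5 : ∀ y ∈ Submodule.span ℝ (Φ : Set E), ⟪x, y⟫ = 0 := by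
    intro y hy
    induction hy using Submodule.span_induction with
    | mem y hy => exact h2 y hy
    | zero => exact inner_zero_right x
    | add y z _ _ hy hz => rw [inner_add_right, hy, hz, add_zero]
    | smul t y _ hy => rw [real_inner_smul_right, hy, mul_zero]
  exact inner_self_eq_zero.mp (h5 x h4)

/-- For `p > h`, a Weyl group element `u` with `uρ - ρ ∈ pX` is trivial: for `α` simple,
`⟨uρ, α∨⟩` is congruent to `1` modulo `p` and of absolute value at most `h - 1`, so it equals `1`. -/
lemma eq_one_of_congr (hΦ : IsRootSystem Φ) (hΔ : IsBase Φ Δ) {a₀ : E}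
    (ha₀ : IsHighestShortRoot Φ Δ a₀) {h p : ℕ} (hcox : (h : ℝ) = pair (rho Φ Δ) a₀ + 1)
    (hbig : h < p) {u : E ≃ₗ[ℝ] E} (hu : u ∈ Weyl Φ) {τ : E} (hτ : τ ∈ weightLattice Φ)
    (hcong : u (rho Φ Δ) - rho Φ Δ = (p : ℝ) • τ) : u = 1 := by
  refine weyl_fix_rho hΦ hΔ hu (sub_eq_zero.mp (eq_zero_of_pair_simple hΦ hΔ fun α hα => ?_))
  obtain ⟨n, hn⟩ := hτ α (hΔ.subset hα)
  have hr : u.symm α ∈ Φ := symm_mem_root (weyl_isometry hΦ hu).2 α (hΔ.subset hα)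
  have h1 := pair_rho_le hΦ hΔ ha₀ hr
  have h2 := pair_rho_le hΦ hΔ ha₀ (neg_mem_root hΦ hr)
  rw [pair_neg_right] at h2
  rw [← weyl_pair hΦ hu] at h1 h2
  have h3 : pair (u (rho Φ Δ)) α = 1 + p * n := by
    have := congrArg (fun x => pair x α) hcong
    simp only [pair_sub, pair_smul, pair_rho_simple hΦ hΔ hα, hn] at this
    linarith
  have hn0 : n = 0 := by
    have hp : (h : ℝ) < p := by exact_mod_cast hbig
    have hp0 : (0 : ℝ) ≤ h := Nat.cast_nonneg _
    rcases lt_trichotomy n 0 with hlt | heq | hgt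
    · have h4 : (n : ℝ) ≤ -1 := by exact_mod_cast (by omega : n ≤ -1)
      nlinarith
    · exact heq
    · have h4 : (1 : ℝ) ≤ n := by exact_mod_cast (by omega : 1 ≤ n)
      nlinarith
  rw [hcong, pair_smul, hn, hn0]
  simp

lemma weyl_linked (hΦ : IsRootSystem Φ) (hΔ : IsBase Φ Δ) {a₀ : E}
    (ha₀ : IsHighestShortRoot Φ Δ a₀) {h p : ℕ} (hcox : (h : ℝ) = pair (rho Φ Δ) a₀ + 1)
    (hbig : h < p) {lam : E} {w : E ≃ₗ[ℝ] E} (hw : w ∈ Weyl Φ) {σ : E}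
    (hσ : σ ∈ weightLattice Φ) (hlink : lam = dotAct Φ Δ w 0 + (p : ℝ) • σ)
    {w' : E ≃ₗ[ℝ] E} (hw' : w' ∈ Weyl Φ) {σ' : E} (hσ' : σ' ∈ weightLattice Φ)
    (heq : dotAct Φ Δ w' lam = (p : ℝ) • σ') : w' = w.symm ∧ σ' = w.symm σ := by
  have hcong : (w' * w) (rho Φ Δ) - rho Φ Δ = (p : ℝ) • (σ' - w' σ) := by
    rw [smul_sub, ← heq, hlink, dotAct, dotAct, LinearEquiv.mul_apply]
    simp only [zero_add, map_add, map_sub, map_smul]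
    abel
  have hτ : σ' - w' σ ∈ weightLattice Φ := by
    intro α hα
    obtain ⟨m, hm⟩ := hσ' α hα
    obtain ⟨n, hn⟩ := hσ _ (symm_mem_root (weyl_isometry hΦ hw').2 α hα)
    exact ⟨m - n, by rw [pair_sub, weyl_pair hΦ hw', hm, hn]; push_cast; rfl⟩
  have hone := eq_one_of_congr hΦ hΔ ha₀ hcox hbig (mul_mem hw' hw) hτ hcong
  have hinv : w' = w.symm := eq_inv_of_mul_eq_one_left hone
  refine ⟨hinv, ?_⟩
  have hp : (p : ℝ) ≠ 0 := Nat.cast_ne_zero.mpr (by omega)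
  rw [hone, LinearEquiv.coe_one, id_eq, sub_self] at hcong
  rw [← hinv]
  exact sub_eq_zero.mp ((smul_eq_zero.mp hcong.symm).resolve_left hp)

end Base

/-- Let `p` be a prime with `p > h`, and let
`λ = w·0 + pσ ∈ X⁺ ∩ C̄_ℤ` with `w ∈ W` and `σ ∈ X`.  If `w' ∈ W` and `σ' ∈ X`
satisfy `w'·λ = pσ'`, then `w' = w⁻¹` and `σ' = w⁻¹σ`.  In particular, there is
exactly one `w' ∈ W` for which `w'·λ` lies in `pX`, and its length equals the
length of `w`. -/
theorem statement10
    (Φ Δ : Finset E) (hΦ : IsRootSystem Φ) (hΔ : IsBase Φ Δ)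
    (a₀ : E) (ha₀ : IsHighestShortRoot Φ Δ a₀)
    (h : ℕ) (hcox : (h : ℝ) = pair (rho Φ Δ) a₀ + 1)
    (p : ℕ) (hp : p.Prime) (hbig : h < p)
    (lam : E) (hdom : isDominant Φ Δ lam) (halc : lam ∈ closedAlcove Φ Δ p)
    (w : E ≃ₗ[ℝ] E) (hw : w ∈ Weyl Φ) (σ : E) (hσ : σ ∈ weightLattice Φ)
    (hlink : lam = dotAct Φ Δ w 0 + (p : ℝ) • σ)
    (w' : E ≃ₗ[ℝ] E) (hw' : w' ∈ Weyl Φ) (σ' : E) (hσ' : σ' ∈ weightLattice Φ)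
    (heq : dotAct Φ Δ w' lam = (p : ℝ) • σ') :
    w' = w.symm ∧ σ' = w.symm σ ∧
      (∃! v : E ≃ₗ[ℝ] E, v ∈ Weyl Φ ∧ ∃ τ ∈ weightLattice Φ,
        dotAct Φ Δ v lam = (p : ℝ) • τ) ∧
      lengthW Δ w' = lengthW Δ w := by
  refine ⟨?_, ?_, ⟨w', ⟨hw', σ', hσ', heq⟩, ?_⟩, ?_⟩
  · exact (weyl_linked hΦ hΔ ha₀ hcox hbig hw hσ hlink hw' hσ' heq).1
  · exact (weyl_linked hΦ hΔ ha₀ hcox hbig hw hσ hlink hw' hσ' heq).2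
  · rintro v ⟨hv, τ, hτ, hvτ⟩
    rw [(weyl_linked hΦ hΔ ha₀ hcox hbig hw hσ hlink hv hτ hvτ).1,
      (weyl_linked hΦ hΔ ha₀ hcox hbig hw hσ hlink hw' hσ' heq).1]
  · rw [(weyl_linked hΦ hΔ ha₀ hcox hbig hw hσ hlink hw' hσ' heq).1, lengthW_symm]

end PaperDNN
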